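/- arXiv:2308.13583 — 4 statements merged into one kernel-verified Lean document; each statement's English description precedes it below -/
import Mathlib

section
/- Let N be a positive integer, β, c ∈ ℂ with c ≠ ±1, and suppose all the coefficients below are well-defined. Define b_n(α,β,c) = -c + (c-1)n/(α+β+2n) + (c+1)(β+n+1)/(α+β+2n+2) for n even, and b_n(α,β,c) = c - (c-1)(n+1)/(α+β+2n+2) - (c+1)(β+n)/(α+β+2n) for n odd. Then for all n ≥ 0: b_{n+2N+1}(-2N-1, β, c) = -b_n(2N+1, β, -c). -/
open Polynomial Finset

/-- Diagonal recurrence coefficient `b_n(α,β,c)` of the monic big `-1` Jacobi polynomials. -/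
noncomputable def bcoef (α β c : ℂ) (n : ℕ) : ℂ :=
  if Even n then
    -c + (c - 1) * n / (α + β + 2 * n) + (c + 1) * (β + n + 1) / (α + β + 2 * n + 2)
  else
    c - (c - 1) * (n + 1) / (α + β + 2 * n + 2) - (c + 1) * (β + n) / (α + β + 2 * n)

/-- Subdiagonal recurrence coefficient `u_n(α,β,c)` of the monic big `-1` Jacobi polynomials. -/
noncomputable def ucoef (α β c : ℂ) (n : ℕ) : ℂ :=
  if Even n then (c - 1) ^ 2 * n * (α + β + n) / (α + β + 2 * n) ^ 2
  else (c + 1) ^ 2 * (α + n) * (β + n) / (α + β + 2 * n) ^ 2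

/-- Monic big `-1` Jacobi polynomials: `Q₀ = 1`, `Q_{n+1} = (X - b_n) Q_n - u_n Q_{n-1}`. -/
noncomputable def bigQ (α β c : ℂ) : ℕ → Polynomial ℂ
  | 0 => 1
  | 1 => X - C (bcoef α β c 0)
  | (n + 2) => (X - C (bcoef α β c (n + 1))) * bigQ α β c (n + 1)
      - C (ucoef α β c (n + 1)) * bigQ α β c n

/-- Shift identity for the diagonal coefficients: for `α = -2N-1`,
`b_{n+2N+1}(-2N-1, β, c) = -b_n(2N+1, β, -c)` for all `n ≥ 0`. -/
theorem bcoef_shift (N : ℕ) (hN : 1 ≤ N) (β c : ℂ)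
    (hc1 : c ≠ 1) (hc2 : c ≠ -1)
    (hden : ∀ m : ℕ, β + (2 * (N : ℂ) + 1) + 2 * m ≠ 0) :
    ∀ n : ℕ, bcoef (-2 * (N : ℂ) - 1) β c (n + 2 * N + 1)
      = -bcoef (2 * (N : ℂ) + 1) β (-c) n := by
  intro n
  have h1 : (2 * (N : ℂ) + 1) + β + 2 * n ≠ 0 := by
    have h := hden n
    intro h0
    apply h
    linear_combination h0
  have h2 : (2 * (N : ℂ) + 1) + β + 2 * n + 2 ≠ 0 := by
    have h := hden (n + 1)
    intro h0
    apply h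
    push_cast
    linear_combination h0
  have e : (-2 * (N : ℂ) - 1) + β + 2 * ((n + 2 * N + 1 : ℕ) : ℂ)
      = (2 * (N : ℂ) + 1) + β + 2 * n := by
    push_cast
    ring
  unfold bcoef
  rw [e]
  obtain ⟨D, hD⟩ : ∃ D : ℂ, D = (2 * (N : ℂ) + 1) + β + 2 * n := ⟨_, rfl⟩
  obtain ⟨E, hE⟩ : ∃ E : ℂ, E = D + 2 := ⟨_, rfl⟩
  rw [← hD] at h1 h2 ⊢
  rw [← hE] at h2 ⊢
  have hβ : β = D - (2 * (N : ℂ) + 1) - 2 * n := by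
    rw [hD]
    ring
  by_cases hn : Even n
  · have hm : ¬ Even (n + 2 * N + 1) := by
      rw [Nat.even_iff] at *
      omega
    rw [if_pos hn, if_neg hm]
    push_cast
    field_simp
    rw [hβ, hE]
    ring
  · have hm : Even (n + 2 * N + 1) := by
      rw [Nat.even_iff] at *
      omega
    rw [if_neg hn, if_pos hm]
    push_cast
    field_simp
    rw [hβ, hE]
    ring
end

section
/- Let N be a positive integer and β, c ∈ ℂ with c ≠ ±1, and assume the recurrence coefficients b_n, u_n at parameters (α,β,c) = (-2N-1, β, c) are well-defined for 0 ≤ n ≤ 2N+1. Let Q_n(x) be the monic polynomials defined by Q_{-1} = 0, Q_0 = 1, and Q_{n+1}(x) = (x - b_n) Q_n(x) - u_n Q_{n-1}(x). Then Q_{2N+1}(x) = (x²-1)^N (x-1). -/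
open Polynomial Finset

noncomputable def dl (D α β : ℂ) (m : ℕ) : ℂ :=
  -D * (α + 2 * m - 1) * (α + β + 2 * m) / ((α + β + 4 * m - 2) * (α + β + 4 * m))

noncomputable def gm (D α β : ℂ) (m : ℕ) : ℂ :=
  2 * m * D * (β + 2 * m + 1) / ((α + β + 4 * m) * (α + β + 4 * m + 2))

/-- Values of monic Jacobi-type polynomials at `z`, built from a contiguous relation. -/
noncomputable def PF (D z β : ℂ) : ℕ → ℂ → ℂ
  | 0, _ => 1
  | (m + 1), α => z * PF D z β m (α + 2) - dl D α β (m + 1) * PF D z β m α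

lemma PF_contig (D z β : ℂ) (m : ℕ) : ∀ α : ℂ,
    (∀ n : ℕ, n ≤ 2 * m + 1 → α + β + 2 * n ≠ 0) →
    PF D z β m (α + 2) = PF D z β m α + gm D α β m * PF D z β (m - 1) (α + 2) := by
  induction m with
  | zero => intro α _; simp [PF, gm]
  | succ m ih =>
    intro α h
    have i1 := ih α (fun n hn => h n (by omega))
    have i2 := ih (α + 2) (fun n hn => by
      have := h (n + 1) (by omega)
      push_cast at this
      intro h0; apply this; linear_combination h0)
    have e0 := h (2 * m) (by omega)
    have e1 := h (2 * m + 1) (by omega)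
    have e2 := h (2 * m + 2) (by omega)
    have e3 := h (2 * m + 3) (by omega)
    push_cast at e0 e1 e2 e3
    have k1 : dl D α β (m + 1) + gm D (α + 2) β m - dl D (α + 2) β (m + 1)
        = gm D α β (m + 1) := by
      have a1 : α + β + 4 * (m + 1 : ℂ) - 2 ≠ 0 := by convert e1 using 1; ring
      have a2 : α + β + 4 * (m + 1 : ℂ) ≠ 0 := by convert e2 using 1; ring
      have a3 : α + β + 4 * (m + 1 : ℂ) + 2 ≠ 0 := by convert e3 using 1; ring
      have a4 : α + 2 + β + 4 * (m + 1 : ℂ) - 2 ≠ 0 := by convert e2 using 1; ring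
      have a5 : α + 2 + β + 4 * (m + 1 : ℂ) ≠ 0 := by convert e3 using 1; ring
      have a6 : α + 2 + β + 4 * (m : ℂ) ≠ 0 := by convert e1 using 1; ring
      have a7 : α + 2 + β + 4 * (m : ℂ) + 2 ≠ 0 := by convert e2 using 1; ring
      unfold dl gm
      push_cast
      rw [show α + 2 + β + 4 * (m + 1 : ℂ) - 2 = α + β + 2 * (2 * m + 2) by ring,
        show α + 2 + β + 4 * (m + 1 : ℂ) = α + β + 2 * (2 * m + 3) by ring,
        show α + 2 + β + 4 * (m : ℂ) + 2 = α + β + 2 * (2 * m + 2) by ring,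
        show α + 2 + β + 4 * (m : ℂ) = α + β + 2 * (2 * m + 1) by ring,
        show α + β + 4 * (m + 1 : ℂ) - 2 = α + β + 2 * (2 * m + 1) by ring,
        show α + β + 4 * (m + 1 : ℂ) + 2 = α + β + 2 * (2 * m + 3) by ring,
        show α + β + 4 * (m + 1 : ℂ) = α + β + 2 * (2 * m + 2) by ring]
      field_simp
      ring
    cases m with
    | zero =>
      simp only [PF, Nat.cast_zero, zero_add, Nat.sub_self] at *
      have : gm D (α + 2) β 0 = 0 := by simp [gm]
      rw [this] at k1
      linear_combination k1
    | succ j =>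
      have k2 : dl D α β (j + 1 + 1) * gm D α β (j + 1)
          = gm D (α + 2) β (j + 1) * dl D (α + 2) β (j + 1) := by
        unfold dl gm
        push_cast at *
        rw [show α + 2 + β + 4 * (j + 1 : ℂ) - 2 = α + β + 2 * (2 * (j + 1)) by ring,
          show α + 2 + β + 4 * (j + 1 : ℂ) + 2 = α + β + 2 * (2 * (j + 1) + 2) by ring,
          show α + 2 + β + 4 * (j + 1 : ℂ) = α + β + 2 * (2 * (j + 1) + 1) by ring,
          show α + β + 4 * (j + 1 + 1 : ℂ) - 2 = α + β + 2 * (2 * (j + 1) + 1) by ring,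
          show α + β + 4 * (j + 1 + 1 : ℂ) = α + β + 2 * (2 * (j + 1) + 2) by ring,
          show α + β + 4 * (j + 1 : ℂ) + 2 = α + β + 2 * (2 * (j + 1) + 1) by ring,
          show α + β + 4 * (j + 1 : ℂ) = α + β + 2 * (2 * (j + 1)) by ring]
        field_simp
        ring
      have r1 : PF D z β (j + 1) (α + 2) = z * PF D z β j (α + 2 + 2)
        - dl D (α + 2) β (j + 1) * PF D z β j (α + 2) := rfl
      have r2 : PF D z β (j + 1 + 1) (α + 2) = z * PF D z β (j + 1) (α + 2 + 2)
        - dl D (α + 2) β (j + 1 + 1) * PF D z β (j + 1) (α + 2) := rfl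
      have r3 : PF D z β (j + 1 + 1) α = z * PF D z β (j + 1) (α + 2)
        - dl D α β (j + 1 + 1) * PF D z β (j + 1) α := rfl
      simp only [Nat.add_sub_cancel] at *
      linear_combination r2 - r3 + z * i2 - gm D (α + 2) β (j + 1) * r1
        - dl D α β (j + 1 + 1) * i1 + PF D z β (j + 1) (α + 2) * k1
        - PF D z β j (α + 2) * k2

lemma PF_top (D z β : ℂ) (m : ℕ) : ∀ α : ℂ, α + 2 * m - 1 = 0 → PF D z β m α = z ^ m := by
  induction m with
  | zero => intro α _; simp [PF]
  | succ m ih =>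
    intro α h
    have h1 : dl D α β (m + 1) = 0 := by simp only [dl, h]; simp
    have h2 := ih (α + 2) (by push_cast at h; linear_combination h)
    rw [PF, h1, h2]; ring

noncomputable def pc (α β c : ℂ) (m : ℕ) : ℂ := -2 * m * (1 - c) / (α + β + 4 * m)
noncomputable def qc (α β c : ℂ) (m : ℕ) : ℂ :=
  (1 + c) * (α + 1 + 2 * m) / (α + β + 4 * m + 2)

lemma bigQ_struct (α β c x : ℂ) (m : ℕ)
    (h : ∀ n : ℕ, n ≤ 2 * m + 1 → α + β + 2 * n ≠ 0) :
    (bigQ α β c (2 * m)).eval x = PF (1 - c ^ 2) (x ^ 2 - 1) β m α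
      + pc α β c m * (x - 1) * PF (1 - c ^ 2) (x ^ 2 - 1) β (m - 1) (α + 2) ∧
    (bigQ α β c (2 * m + 1)).eval x = (x - 1) * PF (1 - c ^ 2) (x ^ 2 - 1) β m (α + 2)
      + qc α β c m * PF (1 - c ^ 2) (x ^ 2 - 1) β m α := by
  induction m with
  | zero =>
    have e1 := h 1 (by omega)
    simp only [Nat.cast_one, mul_one] at e1
    constructor
    · simp [bigQ, PF, pc]
    · simp [bigQ, PF, qc, bcoef]
      field_simp
      ring
  | succ m ih =>
    obtain ⟨A, B⟩ := ih (fun n hn => h n (by omega))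
    have c1 := PF_contig (1 - c ^ 2) (x ^ 2 - 1) β m α (fun n hn => h n (by omega))
    have c2 := PF_contig (1 - c ^ 2) (x ^ 2 - 1) β (m + 1) α (fun n hn => h n (by omega))
    have d : PF (1 - c ^ 2) (x ^ 2 - 1) β (m + 1) α
      = (x ^ 2 - 1) * PF (1 - c ^ 2) (x ^ 2 - 1) β m (α + 2)
        - dl (1 - c ^ 2) α β (m + 1) * PF (1 - c ^ 2) (x ^ 2 - 1) β m α := rfl
    have e0 := h (2 * m) (by omega)
    have e1 := h (2 * m + 1) (by omega)
    have e2 := h (2 * m + 2) (by omega)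
    have e3 := h (2 * m + 3) (by omega)
    push_cast at e0 e1 e2 e3
    obtain ⟨T, hT⟩ : ∃ T, T = α + β + 2 * (2 * (m : ℂ) + 2) := ⟨_, rfl⟩
    have t0 : T - 4 ≠ 0 := by rw [hT]; convert e0 using 1; ring
    have t1 : T - 2 ≠ 0 := by rw [hT]; convert e1 using 1; ring
    have t2 : T ≠ 0 := by rw [hT]; exact e2
    have t3 : T + 2 ≠ 0 := by rw [hT]; convert e3 using 1; ring
    have hβ : β = T - α - 4 * m - 4 := by rw [hT]; ring
    have w0 : α + β + 4 * (m : ℂ) = T - 4 := by linear_combination -hT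
    have w1 : α + β + 4 * (m : ℂ) + 2 = T - 2 := by linear_combination -hT
    have w2 : α + β + 4 * (m + 1 : ℂ) = T := by linear_combination -hT
    have w3 : α + β + 4 * (m + 1 : ℂ) + 2 = T + 2 := by linear_combination -hT
    have w4 : α + β + 4 * (m + 1 : ℂ) - 2 = T - 2 := by linear_combination -hT
    have w5 : α + β + 2 * (2 * m + 1 : ℂ) + 2 = T := by linear_combination -hT
    have w6 : α + β + 2 * (2 * m + 2 : ℂ) + 2 = T + 2 := by linear_combination -hT
    have v1 : α + β + 2 * (2 * m + 1 : ℂ) = T - 2 := by linear_combination -hT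
    have v2 : α + β + 2 * (2 * m + 2 : ℂ) = T := by linear_combination -hT
    have o : ¬ Even (2 * m + 1) := by simp
    have e : Even (2 * m + 2) := by simp [Nat.even_add]
    have s1 : qc α β c m * gm (1 - c ^ 2) α β m = -ucoef α β c (2 * m + 1) * pc α β c m := by
      simp only [qc, gm, ucoef, pc, if_neg o]
      push_cast
      try simp only [w1, w3, w4, w5, w6]
      try simp only [w0, w2, v1, v2]
      rw [hβ]
      field_simp
      ring
    have s2 : pc α β c (m + 1) = -1 - bcoef α β c (2 * m + 1) + qc α β c m := by
      simp only [qc, bcoef, pc, if_neg o]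
      push_cast
      try simp only [w1, w3, w4, w5, w6]
      try simp only [w0, w2, v1, v2]
      rw [hβ]
      field_simp
      ring
    have s3 : -dl (1 - c ^ 2) α β (m + 1)
        = (1 - bcoef α β c (2 * m + 1)) * qc α β c m - ucoef α β c (2 * m + 1) := by
      simp only [qc, bcoef, dl, ucoef, if_neg o]
      push_cast
      try simp only [w1, w3, w4, w5, w6]
      try simp only [w0, w2, v1, v2]
      rw [hβ]
      field_simp
      ring
    have s4 : gm (1 - c ^ 2) α β (m + 1)
        = pc α β c (m + 1) * (-1 - bcoef α β c (2 * m + 2)) - ucoef α β c (2 * m + 2) := by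
      simp only [pc, bcoef, gm, ucoef, if_pos e]
      push_cast
      try simp only [w1, w3, w4, w5, w6]
      try simp only [w0, w2, v1, v2]
      rw [hβ]
      field_simp
      ring
    have s5 : qc α β c (m + 1) = 1 - bcoef α β c (2 * m + 2) + pc α β c (m + 1) := by
      simp only [qc, bcoef, pc, if_pos e]
      push_cast
      try simp only [w1, w3, w4, w5, w6]
      try simp only [w0, w2, v1, v2]
      rw [hβ]
      field_simp
      ring
    have s6 : pc α β c (m + 1) * dl (1 - c ^ 2) α β (m + 1)
        = ucoef α β c (2 * m + 2) * qc α β c m := by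
      simp only [qc, pc, dl, ucoef, if_pos e]
      push_cast
      try simp only [w1, w3, w4, w5, w6]
      try simp only [w0, w2, v1, v2]
      rw [hβ]
      field_simp
      ring
    have q2 : (bigQ α β c (2 * m + 2)).eval x
        = (x - bcoef α β c (2 * m + 1)) * (bigQ α β c (2 * m + 1)).eval x
          - ucoef α β c (2 * m + 1) * (bigQ α β c (2 * m)).eval x := by
      simp [bigQ]
    have q3 : (bigQ α β c (2 * m + 3)).eval x
        = (x - bcoef α β c (2 * m + 2)) * (bigQ α β c (2 * m + 2)).eval x
          - ucoef α β c (2 * m + 2) * (bigQ α β c (2 * m + 1)).eval x := by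
      simp [bigQ]
    rw [show 2 * (m + 1) = 2 * m + 2 by ring]
    simp only [Nat.add_sub_cancel] at *
    generalize PF (1 - c ^ 2) (x ^ 2 - 1) β m α = F0 at *
    generalize PF (1 - c ^ 2) (x ^ 2 - 1) β m (α + 2) = G0 at *
    generalize PF (1 - c ^ 2) (x ^ 2 - 1) β (m - 1) (α + 2) = Gm at *
    generalize PF (1 - c ^ 2) (x ^ 2 - 1) β (m + 1) α = F1 at *
    generalize PF (1 - c ^ 2) (x ^ 2 - 1) β (m + 1) (α + 2) = G1 at *
    have R : (bigQ α β c (2 * m + 2)).eval x = F1 + pc α β c (m + 1) * (x - 1) * G0 := by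
      rw [q2, A, B]
      linear_combination -d - (x - 1) * G0 * s2 - F0 * s3 - (x - 1) * qc α β c m * c1
        - (x - 1) * Gm * s1
    refine ⟨R, ?_⟩
    rw [q3, R, B]
    linear_combination -(x - 1) * c2 - (x - 1) * G0 * s4 - F1 * s5 - pc α β c (m + 1) * d
      + F0 * s6

/-- For `α = -2N-1` one has `Q_{2N+1}(x; -2N-1, β, c) = (x²-1)^N (x-1)`. -/
theorem bigQ_degenerate_alpha (N : ℕ) (hN : 1 ≤ N) (β c : ℂ)
    (hc1 : c ≠ 1) (hc2 : c ≠ -1)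
    (hden : ∀ n : ℕ, n ≤ 2 * N + 1 →
      (-2 * (N : ℂ) - 1) + β + 2 * n ≠ 0 ∧ (-2 * (N : ℂ) - 1) + β + 2 * n + 2 ≠ 0) :
    bigQ (-2 * (N : ℂ) - 1) β c (2 * N + 1)
      = (X ^ 2 - 1) ^ N * (X - 1) := by
  have h : ∀ n : ℕ, n ≤ 2 * N + 1 → (-2 * (N : ℂ) - 1) + β + 2 * n ≠ 0 :=
    fun n hn => (hden n hn).1
  apply Polynomial.funext
  intro x
  rw [(bigQ_struct _ β c x N h).2, PF_top _ _ _ N _ (by ring)]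
  simp [qc]
  ring
end

section
/- Let N be a positive integer and α, c ∈ ℂ with c ≠ ±1, and assume the recurrence coefficients at parameters (α, -2N-1, c) are well-defined for 0 ≤ n ≤ 2N+1. Let Q_n(x) be the monic polynomials defined by Q_{-1} = 0, Q_0 = 1, and Q_{n+1}(x) = (x - b_n) Q_n(x) - u_n Q_{n-1}(x). Then Q_{2N+1}(x) = (x²-c²)^N (x+c). -/
open Polynomial Finset

/-- Product `(β+1)(β+3)...(β+2m-1)`. -/
noncomputable def wProd (β : ℂ) (m : ℕ) : ℂ := ∏ i ∈ range m, (β + 1 + 2 * (i : ℂ))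

/-- Product `s(s+2)...(s+2m-2)`. -/
noncomputable def pProd (s : ℂ) (m : ℕ) : ℂ := ∏ i ∈ range m, (s + 2 * (i : ℂ))

/-- Coefficients of `bigQ` in the basis `(x²-c²)^j`, `(x²-c²)^j (x+c)`. -/
noncomputable def qCoef (α β c : ℂ) : ℕ → ℕ → ℂ
  | 0, 0 => 1
  | 0, _ + 1 => 0
  | 1, 0 => -c - bcoef α β c 0
  | 1, 1 => 1
  | 1, _ + 2 => 0
  | n + 2, 0 => (-c - bcoef α β c (n + 1)) * qCoef α β c (n + 1) 0
      - ucoef α β c (n + 1) * qCoef α β c n 0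
  | n + 2, k + 1 => qCoef α β c (n + 1) k
      + ((-1) ^ k * c - bcoef α β c (n + 1)) * qCoef α β c (n + 1) (k + 1)
      - ucoef α β c (n + 1) * qCoef α β c n (k + 1)

/-- The basis. -/
noncomputable def phiB (c : ℂ) : ℕ → Polynomial ℂ
  | 0 => 1
  | k + 1 => (X + C ((-1) ^ k * c)) * phiB c k

lemma phiB_even (c : ℂ) (k : ℕ) : phiB c (2 * k) = (X ^ 2 - C (c ^ 2)) ^ k := by
  induction k with
  | zero => simp [phiB]
  | succ k ih =>
    rw [show 2 * (k + 1) = 2 * k + 1 + 1 by ring, phiB, phiB, ih, pow_succ (-1 : ℂ), pow_mul]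
    simp
    ring

lemma X_mul_phiB (c : ℂ) (k : ℕ) :
    X * phiB c k = phiB c (k + 1) - C ((-1) ^ k * c) * phiB c k := by
  rw [phiB]; ring

lemma qCoef_zero_of_lt (α β c : ℂ) : ∀ n k, n < k → qCoef α β c n k = 0 := by
  intro n
  induction n using Nat.strong_induction_on with
  | _ n ih =>
    intro k hk
    match n, k with
    | 0, k + 1 => simp [qCoef]
    | 1, k + 2 => simp [qCoef]
    | 1, 1 => omega
    | n + 2, k + 1 =>
      rw [qCoef, ih (n + 1) (by omega) k (by omega), ih (n + 1) (by omega) (k + 1) (by omega),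
        ih n (by omega) (k + 1) (by omega)]
      simp

lemma qCoef_self (α β c : ℂ) : ∀ n, qCoef α β c n n = 1 := by
  intro n
  induction n with
  | zero => simp [qCoef]
  | succ n ih =>
    match n with
    | 0 => simp [qCoef]
    | n + 1 =>
      rw [qCoef, ih, qCoef_zero_of_lt _ _ _ _ _ (by omega), qCoef_zero_of_lt _ _ _ _ _ (by omega)]
      simp

lemma bigQ_expand (α β c : ℂ) : ∀ n M, n < M →
    bigQ α β c n = ∑ k ∈ range M, C (qCoef α β c n k) * phiB c k := by
  intro n
  induction n using Nat.strong_induction_on with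
  | _ n ih =>
    intro M hM
    match n with
    | 0 =>
      obtain ⟨M, rfl⟩ : ∃ m, M = m + 1 := ⟨M - 1, by omega⟩
      rw [sum_range_succ', sum_eq_zero (by intros; simp [qCoef])]
      simp [qCoef, phiB, bigQ]
    | 1 =>
      obtain ⟨M, rfl⟩ : ∃ m, M = m + 1 + 1 := ⟨M - 2, by omega⟩
      rw [sum_range_succ', sum_range_succ', sum_eq_zero (by intros; simp [qCoef])]
      simp [qCoef, phiB, bigQ]
      ring
    | n + 2 =>
      obtain ⟨M, rfl⟩ : ∃ m, M = m + 1 := ⟨M - 1, by omega⟩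
      have h1 : X * bigQ α β c (n + 1) = ∑ k ∈ range M, C (qCoef α β c (n + 1) k) * phiB c (k + 1)
          - ∑ k ∈ range (M + 1), C ((-1) ^ k * c * qCoef α β c (n + 1) k) * phiB c k := by
        rw [sum_range_succ _ M, qCoef_zero_of_lt _ _ _ (n + 1) M (by omega),
          ih (n + 1) (by omega) M (by omega), mul_sum]
        simp only [mul_zero, C_0, zero_mul, add_zero]
        rw [← sum_sub_distrib]
        refine sum_congr rfl fun k _ => ?_
        rw [mul_left_comm, X_mul_phiB, C_mul (a := (-1) ^ k * c)]
        ring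
      rw [bigQ, sub_mul, h1, ih (n + 1) (by omega) (M + 1) (by omega),
        ih n (by omega) (M + 1) (by omega)]
      simp only [sum_range_succ' _ M, qCoef]
      simp only [mul_add, mul_sum]
      have h2 : ∀ k, C (qCoef α β c (n + 1) k + ((-1) ^ k * c - bcoef α β c (n + 1))
            * qCoef α β c (n + 1) (k + 1) - ucoef α β c (n + 1) * qCoef α β c n (k + 1))
            * phiB c (k + 1)
          = C (qCoef α β c (n + 1) k) * phiB c (k + 1)
            - C ((-1) ^ (k + 1) * c * qCoef α β c (n + 1) (k + 1)) * phiB c (k + 1)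
            - C (bcoef α β c (n + 1)) * (C (qCoef α β c (n + 1) (k + 1)) * phiB c (k + 1))
            - C (ucoef α β c (n + 1)) * (C (qCoef α β c n (k + 1)) * phiB c (k + 1)) := by
        intro k
        simp only [C_sub, C_add, C_mul, pow_succ, C_neg, C_1]
        ring
      simp only [h2, sum_sub_distrib]
      simp only [C_sub, C_mul, C_neg, pow_zero, C_1]
      ring

lemma qCoef_formula (s β c q : ℂ) (hqq : q = (c - 1) * (1 + c)) (M : ℕ) (hc1 : c ≠ 1) (hc2 : c ≠ -1)
    (hw : ∀ i : ℕ, β + 1 + 2 * (i : ℂ) ≠ 0) (hp : ∀ i : ℕ, i ≤ 2 * M + 1 → s + 2 * (i : ℂ) ≠ 0) :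
    ∀ m, m ≤ M → ∀ j,
      qCoef (s - β) β c (2 * m) (2 * j) = m.choose j * q ^ m / q ^ j
        * wProd β m / wProd β j * pProd s (m + j + 1) / pProd s (2 * m + 1) ∧
      qCoef (s - β) β c (2 * m) (2 * j + 1) = 2 * (m - j) * m.choose j * q ^ m
        / q ^ j / (1 + c)
        * wProd β m / wProd β (j + 1) * pProd s (m + j + 1) / pProd s (2 * m + 1) ∧
      qCoef (s - β) β c (2 * m + 1) (2 * j) = -(m.choose j * (1 + c) * q ^ m
        / q ^ j * wProd β (m + 1) / wProd β j * pProd s (m + j + 1)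
        / pProd s (2 * m + 2)) ∧
      qCoef (s - β) β c (2 * m + 1) (2 * j + 1) = m.choose j * q ^ m
        / q ^ j * wProd β (m + 1) / wProd β (j + 1) * pProd s (m + j + 2)
        / pProd s (2 * m + 2) := by
  have hq1 : c - 1 ≠ 0 := sub_ne_zero.mpr hc1
  have hq2 : 1 + c ≠ 0 := fun h => hc2 (by linear_combination h)
  have hq : q ≠ 0 := by
    rw [hqq]; exact mul_ne_zero hq1 hq2
  have hW : ∀ j, wProd β j ≠ 0 := fun j => prod_ne_zero_iff.mpr fun i _ => hw i
  have hWs : ∀ j, wProd β (j + 1) = wProd β j * (β + 1 + 2 * (j : ℂ)) :=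
    fun j => prod_range_succ _ _
  have hPs : ∀ j, pProd s (j + 1) = pProd s j * (s + 2 * (j : ℂ)) :=
    fun j => prod_range_succ _ _
  have hP : ∀ j, j ≤ 2 * M + 2 → pProd s j ≠ 0 := fun j hj =>
    prod_ne_zero_iff.mpr fun i hi => hp i (by have := mem_range.mp hi; omega)
  have hch1 : ∀ m i : ℕ, (m.choose (i + 1) : ℂ) = m.choose i * (m - i) / (i + 1) := by
    intro m i
    have h1 : (i : ℂ) + 1 ≠ 0 := by exact_mod_cast Nat.succ_ne_zero i
    rw [eq_div_iff h1]
    rcases le_or_gt i m with h | h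
    · have := Nat.choose_succ_right_eq m i
      rw [← Nat.cast_sub h]
      exact_mod_cast this
    · rw [Nat.choose_eq_zero_of_lt h, Nat.choose_eq_zero_of_lt (by omega)]; simp
  have hch2 : ∀ m i : ℕ, ((m + 1).choose (i + 1) : ℂ) = m.choose i * (m + 1) / (i + 1) := by
    intro m i
    have h1 : (i : ℂ) + 1 ≠ 0 := by exact_mod_cast Nat.succ_ne_zero i
    rw [eq_div_iff h1]
    have := Nat.add_one_mul_choose_eq m i
    rw [mul_comm (m.choose i : ℂ)]
    exact_mod_cast this.symm
  have hch3 : ∀ m j : ℕ, (((m + 1 : ℕ) : ℂ) - j) * (m + 1).choose j = (m + 1) * m.choose j := by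
    intro m j
    have h1 := hch1 (m + 1) j
    have h2 := hch2 m j
    have h3 : (j : ℂ) + 1 ≠ 0 := by exact_mod_cast Nat.succ_ne_zero j
    rw [h2] at h1
    field_simp at h1
    push_cast at h1 ⊢
    linear_combination -h1
  have hbE : ∀ m : ℕ, bcoef (s - β) β c (2 * m) = -c + (c - 1) * (2 * m) / (s + 2 * (2 * m))
      + (c + 1) * (β + 2 * m + 1) / (s + 2 * (2 * m + 1)) := by
    intro m
    rw [bcoef, if_pos (by simp)]; push_cast; ring_nf
  have hbO : ∀ m : ℕ, bcoef (s - β) β c (2 * m + 1) = c - (c - 1) * (2 * m + 2)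
      / (s + 2 * (2 * m + 2)) - (c + 1) * (β + 2 * m + 1) / (s + 2 * (2 * m + 1)) := by
    intro m
    rw [bcoef, if_neg (by simp)]; push_cast; ring_nf
  have huE : ∀ m : ℕ, ucoef (s - β) β c (2 * m) = (c - 1) ^ 2 * (2 * m) * (s + 2 * m)
      / (s + 2 * (2 * m)) ^ 2 := by
    intro m
    rw [ucoef, if_pos (by simp)]; push_cast; ring_nf
  have huO : ∀ m : ℕ, ucoef (s - β) β c (2 * m + 1) = (c + 1) ^ 2 * (s - β + 2 * m + 1)
      * (β + 2 * m + 1) / (s + 2 * (2 * m + 1)) ^ 2 := by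
    intro m
    rw [ucoef, if_neg (by simp)]; push_cast; ring_nf
  have hone : ((-1 : ℂ)) ^ 2 = 1 := by norm_num
  have hsgE : ∀ i : ℕ, ((-1 : ℂ)) ^ (2 * i) = 1 := fun i => by rw [pow_mul, hone, one_pow]
  have hsgO : ∀ i : ℕ, ((-1 : ℂ)) ^ (2 * i + 1) = -1 := fun i => by rw [pow_succ, hsgE]; ring
  have hi1 : ∀ i : ℕ, (i : ℂ) + 1 ≠ 0 := fun i => by exact_mod_cast Nat.succ_ne_zero i
  intro m
  induction m with
  | zero =>
    intro _ j
    have hs0 : s ≠ 0 := by simpa using hp 0 (by omega)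
    have hs1 : s + 2 ≠ 0 := by simpa using hp 1 (by omega)
    have hb1 : β + 1 ≠ 0 := by simpa using hw 0
    match j with
    | 0 =>
      have hb0 := hbE 0
      simp only [mul_zero, Nat.cast_zero, zero_div, add_zero] at hb0
      refine ⟨?_, ?_, ?_, ?_⟩
      · simp [qCoef, wProd, pProd, hs0]
      · simp [qCoef]
      · simp [qCoef, wProd, pProd, prod_range_succ, hb0]
        field_simp
        ring
      · simp [qCoef, wProd, pProd, prod_range_succ]
        field_simp
    | j + 1 =>
      refine ⟨?_, ?_, ?_, ?_⟩ <;> simp [qCoef, mul_add]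
  | succ m ih =>
    intro hm
    have ih := ih (by omega)
    obtain ⟨D1, hD1⟩ : ∃ D, D = s + 2 * (2 * (m : ℂ) + 1) := ⟨_, rfl⟩
    obtain ⟨D2, hD2⟩ : ∃ D, D = s + 2 * (2 * (m : ℂ) + 2) := ⟨_, rfl⟩
    obtain ⟨D3, hD3⟩ : ∃ D, D = s + 2 * (2 * (m : ℂ) + 3) := ⟨_, rfl⟩
    have e1 : D1 ≠ 0 := by
      have := hp (2 * m + 1) (by omega); push_cast at this; rw [hD1]; exact this
    have e2 : D2 ≠ 0 := by
      have := hp (2 * m + 2) (by omega); push_cast at this; rw [hD2]; exact this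
    have e3 : D3 ≠ 0 := by
      have := hp (2 * m + 3) (by omega); push_cast at this; rw [hD3]; exact this
    have hP0 := hP (2 * m + 1) (by omega)
    have hP2 : pProd s (2 * m + 2) = pProd s (2 * m + 1) * D1 := by
      rw [hPs, hD1]; push_cast; ring
    have hP3 : pProd s (2 * (m + 1) + 1) = pProd s (2 * m + 1) * D1 * D2 := by
      rw [show 2 * (m + 1) + 1 = 2 * m + 2 + 1 by ring, hPs, hP2, hD2]; push_cast; ring
    have hP4 : pProd s (2 * (m + 1) + 2) = pProd s (2 * m + 1) * D1 * D2 * D3 := by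
      rw [show 2 * (m + 1) + 2 = 2 * m + 3 + 1 by ring, hPs,
        show 2 * m + 3 = 2 * (m + 1) + 1 by ring, hP3, hD3]; push_cast; ring
    have hbO' : bcoef (s - β) β c (2 * m + 1) = c - (c - 1) * (2 * m + 2)
        / D2 - (c + 1) * (β + 2 * m + 1) / D1 := by
      rw [hbO, hD1, hD2]
    have huO' : ucoef (s - β) β c (2 * m + 1) = (c + 1) ^ 2 * (s - β + 2 * m + 1)
        * (β + 2 * m + 1) / D1 ^ 2 := by
      rw [huO, hD1]
    have hbE' : bcoef (s - β) β c (2 * m + 1 + 1) = -c + (c - 1) * (2 * m + 2)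
        / D2 + (c + 1) * (β + 2 * m + 3) / D3 := by
      rw [show 2 * m + 1 + 1 = 2 * (m + 1) by ring, hbE, hD2, hD3]; push_cast; ring_nf
    have huE' : ucoef (s - β) β c (2 * m + 1 + 1) = (c - 1) ^ 2 * (2 * m + 2) * (s + 2 * m + 2)
        / D2 ^ 2 := by
      rw [show 2 * m + 1 + 1 = 2 * (m + 1) by ring, huE, hD2]; push_cast; ring_nf
    have hWm : wProd β (m + 1) = wProd β m * (β + 1 + 2 * (m : ℂ)) := hWs m
    have hWm2 : wProd β (m + 1 + 1) = wProd β m * (β + 1 + 2 * (m : ℂ))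
        * (β + 3 + 2 * (m : ℂ)) := by rw [hWs, hWs]; push_cast; ring
    have hq0 := pow_ne_zero m hq
    have hw00 := hW 0
    have A1 : ∀ j, qCoef (s - β) β c (2 * (m + 1)) (2 * j) = (m + 1).choose j
        * q ^ (m + 1) / q ^ j
        * wProd β (m + 1) / wProd β j * pProd s (m + 1 + j + 1) / pProd s (2 * (m + 1) + 1) := by
      intro j
      match j with
      | 0 =>
        have h1 := (ih 0).1
        have h2 := (ih 0).2.2.1
        rw [hP3, show 2 * (m + 1) = 2 * m + 2 by ring, mul_zero, qCoef]
        rw [mul_zero] at h1 h2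
        rw [h1, h2, hbO', huO', hP2, hWm,
          show m + 1 + 0 + 1 = m + 0 + 1 + 1 by ring, hPs (m + 0 + 1), pow_succ q m]
        simp only [pow_zero, Nat.choose_zero_right]
        push_cast
        generalize q ^ m = Q at hq0 ⊢
        field_simp
        simp only [hqq, hD1, hD2]
        ring
      | i + 1 =>
        have h1 := (ih (i + 1)).1
        have h2 := (ih (i + 1)).2.2.1
        have h3 := (ih i).2.2.2
        rw [hP3, show 2 * (m + 1) = 2 * m + 2 by ring, show 2 * (i + 1) = 2 * i + 1 + 1 by ring,
          qCoef]
        rw [show 2 * (i + 1) = 2 * i + 1 + 1 by ring] at h1 h2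
        rw [h1, h2, h3, hbO', huO', hP2, hWm,
          show m + 1 + (i + 1) + 1 = m + i + 2 + 1 by ring, hPs (m + i + 2),
          show m + (i + 1) + 1 = m + i + 2 by ring, hsgO, hch1 m i, hch2 m i, pow_succ q m, pow_succ q i]
        have hQi := pow_ne_zero i hq
        have hw0 := hW (i + 1)
        have hi := hi1 i
        push_cast
        generalize q ^ m = Q at hq0 ⊢
        generalize q ^ i = Qi at hQi ⊢
        field_simp
        simp only [hqq, hD1, hD2]
        ring
    have A2 : ∀ j, qCoef (s - β) β c (2 * (m + 1)) (2 * j + 1) = 2 * (((m + 1 : ℕ) : ℂ) - j)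
        * (m + 1).choose j * q ^ (m + 1) / q ^ j / (1 + c)
        * wProd β (m + 1) / wProd β (j + 1) * pProd s (m + 1 + j + 1)
        / pProd s (2 * (m + 1) + 1) := by
      intro j
      have h1 := (ih j).2.1
      have h2 := (ih j).2.2.2
      have h3 := (ih j).2.2.1
      rw [hP3, show 2 * (m + 1) = 2 * m + 2 by ring, qCoef, h1, h2, h3, hbO', huO', hP2, hWm,
        show m + 1 + j + 1 = m + j + 1 + 1 by ring, show m + j + 2 = m + j + 1 + 1 by ring,
        hPs (m + j + 1), hsgE, pow_succ q m,
        show 2 * (((m + 1 : ℕ) : ℂ) - j) * (m + 1).choose j = 2 * (m + 1) * m.choose j by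
          linear_combination 2 * hch3 m j]
      have hWj := hWs j
      rw [hWj]
      have hwj := hw j
      have hWj0 := hW j
      have hQi := pow_ne_zero j hq
      push_cast
      generalize q ^ m = Q at hq0 ⊢
      generalize q ^ j = Qi at hQi ⊢
      field_simp
      simp only [hqq, hD1, hD2]
      ring
    have A3 : ∀ j, qCoef (s - β) β c (2 * (m + 1) + 1) (2 * j) = -((m + 1).choose j * (1 + c)
        * q ^ (m + 1) / q ^ j * wProd β (m + 1 + 1) / wProd β j * pProd s (m + 1 + j + 1)
        / pProd s (2 * (m + 1) + 2)) := by
      intro j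
      match j with
      | 0 =>
        have h1 := A1 0
        have h2 := (ih 0).2.2.1
        rw [hP4, show 2 * (m + 1) + 1 = 2 * m + 1 + 2 by ring, mul_zero, qCoef]
        rw [mul_zero, hP3, show 2 * (m + 1) = 2 * m + 1 + 1 by ring] at h1
        rw [mul_zero] at h2
        rw [h1, h2, hbE', huE', hP2, hWm2, hWm,
          show m + 1 + 0 + 1 = m + 0 + 1 + 1 by ring, hPs (m + 0 + 1), pow_succ q m]
        simp only [pow_zero, Nat.choose_zero_right]
        push_cast
        generalize q ^ m = Q at hq0 ⊢
        field_simp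
        simp only [hqq, hD2, hD3]
        ring
      | i + 1 =>
        have h1 := A1 (i + 1)
        have h2 := (ih (i + 1)).2.2.1
        have h3 := A2 i
        rw [hP4, show 2 * (m + 1) + 1 = 2 * m + 1 + 2 by ring,
          show 2 * (i + 1) = 2 * i + 1 + 1 by ring, qCoef]
        rw [hP3, show 2 * (m + 1) = 2 * m + 1 + 1 by ring] at h1 h3
        rw [show 2 * (i + 1) = 2 * i + 1 + 1 by ring] at h1 h2
        rw [show 2 * (((m + 1 : ℕ) : ℂ) - i) * (m + 1).choose i = 2 * (m + 1) * m.choose i by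
          linear_combination 2 * hch3 m i] at h3
        rw [h1, h2, h3, hbE', huE', hP2, hWm2, hWm,
          show m + 1 + (i + 1) + 1 = m + i + 2 + 1 by ring, hPs (m + i + 2),
          show m + (i + 1) + 1 = m + i + 2 by ring, show m + 1 + i + 1 = m + i + 2 by ring,
          hsgO, hch1 m i, hch2 m i, pow_succ q m, pow_succ q i]
        have hQi := pow_ne_zero i hq
        have hw0 := hW (i + 1)
        have hi := hi1 i
        push_cast
        generalize q ^ m = Q at hq0 ⊢
        generalize q ^ i = Qi at hQi ⊢
        field_simp
        simp only [hqq, hD2, hD3]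
        ring
    have A4 : ∀ j, qCoef (s - β) β c (2 * (m + 1) + 1) (2 * j + 1) = (m + 1).choose j * q ^ (m + 1)
        / q ^ j * wProd β (m + 1 + 1) / wProd β (j + 1) * pProd s (m + 1 + j + 2)
        / pProd s (2 * (m + 1) + 2) := by
      intro j
      rcases lt_or_ge (m + 1) j with hj | hj
      · rw [qCoef_zero_of_lt _ _ _ _ _ (by omega), Nat.choose_eq_zero_of_lt hj]; simp
      rcases hj.eq_or_lt with rfl | hj
      · rw [qCoef_self, Nat.choose_self, show m + 1 + (m + 1) + 2 = 2 * (m + 1) + 2 by ring]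
        have := hP (2 * (m + 1) + 2) (by omega)
        have h4 := hW (m + 1 + 1)
        have h5 := pow_ne_zero (m + 1) hq
        field_simp
        simp
      have h1 := A1 j
      have h2 := (ih j).2.2.2
      have h3 := A2 j
      have hmj : (m : ℂ) + 1 - j ≠ 0 := by
        rw [sub_ne_zero]; exact_mod_cast hj.ne'
      have hcc : ((m + 1).choose j : ℂ) = (m + 1) * m.choose j / (m + 1 - j) := by
        rw [eq_div_iff hmj]
        have := hch3 m j
        push_cast at this
        linear_combination this
      rw [show 2 * (((m + 1 : ℕ) : ℂ) - j) * (m + 1).choose j = 2 * (m + 1) * m.choose j by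
          linear_combination 2 * hch3 m j] at h3
      rw [hP4, show 2 * (m + 1) + 1 = 2 * m + 1 + 2 by ring, qCoef]
      rw [hP3, show 2 * (m + 1) = 2 * m + 1 + 1 by ring] at h1 h3
      rw [h1, h2, h3, hbE', huE', hP2, hWm2, hWm,
        show m + 1 + j + 2 = m + j + 2 + 1 by ring, hPs (m + j + 2),
        show m + 1 + j + 1 = m + j + 2 by ring, hsgE, pow_succ q m, hcc]
      have hWj := hWs j
      rw [hWj]
      have hwj' : β + 1 + (j : ℂ) * 2 ≠ 0 := by rw [mul_comm (j : ℂ)]; exact hw j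
      have hwj := hw j
      have hWj0 := hW j
      have hQi := pow_ne_zero j hq
      push_cast
      generalize q ^ m = Q at hq0 ⊢
      generalize q ^ j = Qi at hQi ⊢
      field_simp
      simp only [hqq, hD2, hD3]
      ring
    exact fun j => ⟨A1 j, A2 j, A3 j, A4 j⟩

lemma continuous_bcoef (s c : ℂ) (n : ℕ) : Continuous fun β => bcoef (s - β) β c n := by
  simp only [bcoef, sub_add_cancel]
  split_ifs <;> fun_prop

lemma continuous_ucoef (s c : ℂ) (n : ℕ) : Continuous fun β => ucoef (s - β) β c n := by
  simp only [ucoef, sub_add_cancel]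
  split_ifs <;> fun_prop

lemma continuous_qCoef (s c : ℂ) : ∀ n k, Continuous fun β => qCoef (s - β) β c n k := by
  intro n
  induction n using Nat.strong_induction_on with
  | _ n ih =>
    intro k
    have hb := continuous_bcoef s c
    have hu := continuous_ucoef s c
    match n, k with
    | 0, 0 => simp only [qCoef]; fun_prop
    | 0, k + 1 => simp only [qCoef]; fun_prop
    | 1, 0 => simp only [qCoef]; fun_prop
    | 1, 1 => simp only [qCoef]; fun_prop
    | 1, k + 2 => simp only [qCoef]; fun_prop
    | n + 2, 0 =>
      have h1 := ih (n + 1) (by omega)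
      have h2 := ih n (by omega)
      simp only [qCoef]; fun_prop
    | n + 2, k + 1 =>
      have h1 := ih (n + 1) (by omega)
      have h2 := ih n (by omega)
      simp only [qCoef]; fun_prop

lemma continuous_wProd (j : ℕ) : Continuous fun β => wProd β j := by
  unfold wProd; fun_prop

lemma dense_good : Dense {β : ℂ | ∀ i : ℕ, β + 1 + 2 * (i : ℂ) ≠ 0} := by
  have h : (Set.range fun i : ℕ => -1 - 2 * (i : ℂ)).Countable := Set.countable_range _
  refine (h.dense_compl ℂ).mono ?_
  intro β hβ i hi
  exact hβ ⟨i, by simp only; linear_combination -hi⟩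

/-- For `β = -2N-1` one has `Q_{2N+1}(x; α, -2N-1, c) = (x²-c²)^N (x+c)`. -/
theorem bigQ_degenerate_beta (N : ℕ) (hN : 1 ≤ N) (α c : ℂ)
    (hc1 : c ≠ 1) (hc2 : c ≠ -1)
    (hden : ∀ n : ℕ, n ≤ 2 * N + 1 →
      α + (-2 * (N : ℂ) - 1) + 2 * n ≠ 0 ∧ α + (-2 * (N : ℂ) - 1) + 2 * n + 2 ≠ 0) :
    bigQ α (-2 * (N : ℂ) - 1) c (2 * N + 1)
      = (X ^ 2 - C (c ^ 2)) ^ N * (X + C c) := by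
  obtain ⟨β₀, hβ⟩ : ∃ b : ℂ, b = -2 * (N : ℂ) - 1 := ⟨_, rfl⟩
  obtain ⟨s, hs⟩ : ∃ s : ℂ, s = α + β₀ := ⟨_, rfl⟩
  have hp : ∀ i : ℕ, i ≤ 2 * N + 1 → s + 2 * (i : ℂ) ≠ 0 := by
    intro i hi
    rw [hs, hβ]; exact (hden i hi).1
  rw [← hβ, show α = s - β₀ by rw [hs]; ring]
  have hw0 : wProd β₀ (N + 1) = 0 := by
    rw [wProd, prod_range_succ, hβ]; ring
  have hwn : ∀ j, j ≤ N → wProd β₀ j ≠ 0 := by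
    intro j hj
    refine prod_ne_zero_iff.mpr fun i hi => ?_
    have hi' : i < N := by have := mem_range.mp hi; omega
    have h3 : (i : ℂ) - N ≠ 0 := sub_ne_zero.mpr (by exact_mod_cast hi'.ne)
    rw [hβ, show -2 * (N : ℂ) - 1 + 1 + 2 * i = 2 * (i - N) by ring]
    exact mul_ne_zero two_ne_zero h3
  have F := fun β hβ => qCoef_formula s β c _ rfl N hc1 hc2 hβ hp N le_rfl
  have hWne : ∀ β : ℂ, (∀ i : ℕ, β + 1 + 2 * (i : ℂ) ≠ 0) → ∀ j, wProd β j ≠ 0 :=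
    fun β hb j => prod_ne_zero_iff.mpr fun i _ => hb i
  have hev : ∀ j, j ≤ N → qCoef (s - β₀) β₀ c (2 * N + 1) (2 * j) = 0 := by
    intro j hj
    have := Continuous.ext_on dense_good
      ((continuous_qCoef s c (2 * N + 1) (2 * j)).mul (continuous_wProd j))
      (g := fun β => -(N.choose j * (1 + c) * ((c - 1) * (1 + c)) ^ N
        / ((c - 1) * (1 + c)) ^ j * pProd s (N + j + 1) / pProd s (2 * N + 2)) * wProd β (N + 1))
      ((continuous_wProd (N + 1)).const_mul _) (by
        intro β hb
        have h1 := hWne β hb j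
        simp only [Pi.mul_apply]
        rw [(F β hb j).2.2.1]
        field_simp)
    have h2 := congrFun this β₀
    simp only [Pi.mul_apply, hw0, mul_zero] at h2
    exact (mul_eq_zero.mp h2).resolve_right (hwn j hj)
  have hod : ∀ j, j < N → qCoef (s - β₀) β₀ c (2 * N + 1) (2 * j + 1) = 0 := by
    intro j hj
    have := Continuous.ext_on dense_good
      ((continuous_qCoef s c (2 * N + 1) (2 * j + 1)).mul (continuous_wProd (j + 1)))
      (g := fun β => (N.choose j * ((c - 1) * (1 + c)) ^ N
        / ((c - 1) * (1 + c)) ^ j * pProd s (N + j + 2) / pProd s (2 * N + 2)) * wProd β (N + 1))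
      ((continuous_wProd (N + 1)).const_mul _) (by
        intro β hb
        have h1 := hWne β hb (j + 1)
        simp only [Pi.mul_apply]
        rw [(F β hb j).2.2.2]
        field_simp)
    have h2 := congrFun this β₀
    simp only [Pi.mul_apply, hw0, mul_zero] at h2
    exact (mul_eq_zero.mp h2).resolve_right (hwn (j + 1) hj)
  rw [bigQ_expand _ _ _ (2 * N + 1) (2 * N + 1 + 1) (by omega), sum_range_succ, qCoef_self,
    sum_eq_zero, phiB, phiB_even, pow_mul]
  · simp
    ring
  · intro k hk
    have hk' := mem_range.mp hk
    rcases Nat.even_or_odd' k with ⟨j, rfl | rfl⟩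
    · rw [hev j (by omega)]; simp
    · rw [hod j (by omega)]; simp
end

section
/- Let N ∈ ℕ, m ∈ ℕ₀, β, c ∈ ℂ, c ≠ ±1, with all recurrence coefficients well-defined. Then the big -1 Jacobi polynomials factorize as Q_{2N+1+m}(x; -2N-1, β, c) = (-1)^m (x²-1)^N (x-1) · Q_m(-x; 2N+1, β, -c), where Q_n(x; α, β, c) are the monic polynomials generated by the three-term recurrence with coefficients b_n(α,β,c), u_n(α,β,c). -/
open Polynomial Finset

/-- First connection coefficient for the shift `α → α + 2`. -/
noncomputable def connA (α β c : ℂ) (n : ℕ) : ℂ :=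
  if Even n then
    -2 * (c - 1) * (α + β + n + 2) / ((α + β + 2 * n + 2) * (α + β + 2 * n + 4))
  else 2 * (c + 1) * (α + n + 2) / ((α + β + 2 * n + 2) * (α + β + 2 * n + 4))

/-- Second connection coefficient for the shift `α → α + 2`. -/
noncomputable def connB (α β c : ℂ) (n : ℕ) : ℂ :=
  if Even n then
    (c ^ 2 - 1) * (α + β + n + 2) * (α + n + 1) / (α + β + 2 * n + 2) ^ 2
  else (c ^ 2 - 1) * (α + β + n + 1) * (α + n + 2) / (α + β + 2 * n + 2) ^ 2

lemma bigQ_rec (α β c : ℂ) (n : ℕ) :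
    bigQ α β c (n + 2) = (X - C (bcoef α β c (n + 1))) * bigQ α β c (n + 1)
      - C (ucoef α β c (n + 1)) * bigQ α β c n := by
  rw [bigQ]

lemma conn_ids (α β c : ℂ) (h : ∀ n : ℕ, α + β + 2 * n ≠ 0) (n : ℕ) :
    (connA α β c (n+2) + bcoef (α+2) β c (n+1) = bcoef α β c (n+3) + connA α β c (n+1)) ∧
    (connB α β c (n+2) + bcoef (α+2) β c (n+1) * connA α β c (n+1) + ucoef (α+2) β c (n+1)
      = ucoef α β c (n+3) + connA α β c (n+1) * bcoef α β c (n+2) + connB α β c (n+1)) ∧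
    (bcoef (α+2) β c (n+1) * connB α β c (n+1) + ucoef (α+2) β c (n+1) * connA α β c n
      = connA α β c (n+1) * ucoef α β c (n+2) + connB α β c (n+1) * bcoef α β c (n+1)) ∧
    (ucoef (α+2) β c (n+1) * connB α β c n = connB α β c (n+1) * ucoef α β c (n+1)) := by
  obtain ⟨D, hD⟩ : ∃ D : ℂ, D = α + β + 2 * n := ⟨_, rfl⟩
  have hβ : β = D - α - 2 * n := by rw [hD]; ring
  have h2 : D + 2 ≠ 0 := by have := h (n+1); push_cast at this; rw [hD]; convert this using 1; ring
  have h4 : D + 4 ≠ 0 := by have := h (n+2); push_cast at this; rw [hD]; convert this using 1; ring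
  have h6 : D + 6 ≠ 0 := by have := h (n+3); push_cast at this; rw [hD]; convert this using 1; ring
  have h8 : D + 8 ≠ 0 := by have := h (n+4); push_cast at this; rw [hD]; convert this using 1; ring
  have e0 : α + β + 2 * (n:ℂ) + 2 = D + 2 := by rw [hD]
  have e1 : α + β + 2 * (n:ℂ) + 4 = D + 4 := by rw [hD]
  have e2 : α + β + 2 * ((n:ℂ)+1) = D + 2 := by rw [hD]; ring
  have e3 : α + β + 2 * ((n:ℂ)+2) = D + 4 := by rw [hD]; ring
  have e4 : α + β + 2 * ((n:ℂ)+3) = D + 6 := by rw [hD]; ring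
  have e5 : α + 2 + β + 2 * ((n:ℂ)+1) = D + 4 := by rw [hD]; ring
  have f1 : D + 2 + 2 = D + 4 := by ring
  have f2 : D + 2 + 4 = D + 6 := by ring
  have f3 : D + 4 + 2 = D + 6 := by ring
  have f4 : D + 4 + 4 = D + 8 := by ring
  have f5 : D + 6 + 2 = D + 8 := by ring
  rcases Nat.even_or_odd n with hn | hn
  · have p1 : ¬ Even (n+1) := by grind
    have p2 : Even (n+2) := by grind
    have p3 : ¬ Even (n+3) := by grind
    simp only [connA, connB, bcoef, ucoef, hn, p1, p2, p3, if_true, if_false]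
    push_cast
    simp only [e0, e1, e2, e3, e4, e5, f1, f2, f3, f4, f5]
    subst hβ
    refine ⟨?_, ?_, ?_, ?_⟩ <;> field_simp <;> ring
  · have p0 : ¬ Even n := by grind
    have p1 : Even (n+1) := by grind
    have p2 : ¬ Even (n+2) := by grind
    have p3 : Even (n+3) := by grind
    simp only [connA, connB, bcoef, ucoef, p0, p1, p2, p3, if_true, if_false]
    push_cast
    simp only [e0, e1, e2, e3, e4, e5, f1, f2, f3, f4, f5]
    subst hβ
    refine ⟨?_, ?_, ?_, ?_⟩ <;> field_simp <;> ring

lemma conn_init (α β c : ℂ) (h : ∀ n : ℕ, α + β + 2 * n ≠ 0) :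
    connA α β c 0 = bcoef α β c 0 + bcoef α β c 1 ∧
    connB α β c 0 = bcoef α β c 0 ^ 2 + ucoef α β c 1 - 1 ∧
    connA α β c 1 + bcoef (α+2) β c 0 = bcoef α β c 2 + connA α β c 0 ∧
    connB α β c 1 + bcoef (α+2) β c 0 * connA α β c 0
      = ucoef α β c 2 + connA α β c 0 * bcoef α β c 1 + connB α β c 0 ∧
    bcoef (α+2) β c 0 * connB α β c 0
      = connA α β c 0 * ucoef α β c 1 + connB α β c 0 * bcoef α β c 0 := by
  obtain ⟨D, hD⟩ : ∃ D : ℂ, D = α + β := ⟨_, rfl⟩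
  have hβ : β = D - α := by rw [hD]; ring
  have h2 : D + 2 ≠ 0 := by have := h 1; rw [hD]; convert this using 1; norm_num
  have h4 : D + 4 ≠ 0 := by have := h 2; rw [hD]; convert this using 1; norm_num
  have h6 : D + 6 ≠ 0 := by have := h 3; rw [hD]; convert this using 1; norm_num
  have p1 : ¬ Even 1 := by decide
  have p0 : Even 0 := by decide
  have p2 : Even 2 := by decide
  have e5 : α + 2 + β = D + 2 := by rw [hD]; ring
  have f1 : D + 2 + 2 = D + 4 := by ring
  have f2 : D + 2 + 4 = D + 6 := by ring
  have f3 : D + 4 + 2 = D + 6 := by ring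
  simp only [connA, connB, bcoef, ucoef, p0, p1, p2, if_true, if_false, Nat.cast_zero,
    Nat.cast_one, Nat.cast_ofNat, mul_zero, add_zero, zero_div, mul_one, e5, ← hD,
    show (2:ℂ) * 2 = 4 by norm_num, f1, f2, f3]
  subst hβ
  refine ⟨?_, ?_, ?_, ?_, ?_⟩ <;> field_simp <;> ring

lemma conn_rel (α β c : ℂ) (h : ∀ n : ℕ, α + β + 2 * n ≠ 0) (n : ℕ) :
    (X ^ 2 - 1) * bigQ (α + 2) β c n = bigQ α β c (n + 2)
      + C (connA α β c n) * bigQ α β c (n + 1) + C (connB α β c n) * bigQ α β c n := by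
  obtain ⟨i1, i2, i3, i4, i5⟩ := conn_init α β c h
  have q0 : bigQ α β c 0 = 1 := by rw [bigQ]
  have q1 : bigQ α β c 1 = X - C (bcoef α β c 0) := by rw [bigQ]
  have q2 := bigQ_rec α β c 0
  have q3 := bigQ_rec α β c 1
  have s0 : bigQ (α+2) β c 0 = 1 := by rw [bigQ]
  have s1 : bigQ (α+2) β c 1 = X - C (bcoef (α+2) β c 0) := by rw [bigQ]
  simp only [zero_add, Nat.reduceAdd] at q2 q3
  have base0 : (X ^ 2 - 1) * bigQ (α + 2) β c 0 = bigQ α β c 2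
      + C (connA α β c 0) * bigQ α β c 1 + C (connB α β c 0) * bigQ α β c 0 := by
    rw [s0, q2, q1, q0, i1, i2]
    simp only [map_add, map_sub, map_pow, map_one]
    ring
  induction n using Nat.twoStepInduction with
  | zero => exact base0
  | one =>
    have j3 := congrArg (C : ℂ → ℂ[X]) i3
    have j4 := congrArg (C : ℂ → ℂ[X]) i4
    have j5 := congrArg (C : ℂ → ℂ[X]) i5
    simp only [map_add, map_mul] at j3 j4 j5
    rw [s0] at base0
    rw [s1]
    simp only [Nat.reduceAdd]
    rw [q0] at base0 q2
    linear_combination (X - C (bcoef (α+2) β c 0)) * base0 - q3 - C (connA α β c 0) * q2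
      + C (connB α β c 0) * (-q1) - j3 * bigQ α β c 2 - j4 * bigQ α β c 1 - j5
  | more n ih0 ih1 =>
    obtain ⟨k1, k2, k3, k4⟩ := conn_ids α β c h n
    have j1 := congrArg (C : ℂ → ℂ[X]) k1
    have j2 := congrArg (C : ℂ → ℂ[X]) k2
    have j3 := congrArg (C : ℂ → ℂ[X]) k3
    have j4 := congrArg (C : ℂ → ℂ[X]) k4
    simp only [map_add, map_mul] at j1 j2 j3 j4
    have r2 := bigQ_rec α β c n
    have r3 := bigQ_rec α β c (n+1)
    have r4 := bigQ_rec α β c (n+2)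
    have t := bigQ_rec (α+2) β c n
    simp only [add_assoc, Nat.reduceAdd] at r2 r3 r4 t ih0 ih1 ⊢
    linear_combination (X ^ 2 - 1) * t + (X - C (bcoef (α+2) β c (n+1))) * ih1
      - C (ucoef (α+2) β c (n+1)) * ih0 - r4 - C (connA α β c (n+1)) * r3
      - C (connB α β c (n+1)) * r2
      - j1 * bigQ α β c (n+3) - j2 * bigQ α β c (n+2) - j3 * bigQ α β c (n+1)
      - j4 * bigQ α β c n

lemma bigQ_base (β c : ℂ) (N : ℕ) (hden : ∀ n : ℕ, β - (2 * (N : ℂ) + 1) + 2 * n ≠ 0) :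
    bigQ (-2 * (N : ℂ) - 1) β c (2 * N + 1) = (X ^ 2 - 1) ^ N * (X - 1) := by
  induction N with
  | zero =>
    have h1 := hden 1
    have hb : bcoef (-2 * ((0:ℕ) : ℂ) - 1) β c 0 = 1 := by
      have h1' : β + 1 ≠ 0 := by
        intro h0; apply h1; push_cast; linear_combination h0
      have e : (-1 + β + 2 : ℂ) = β + 1 := by ring
      simp [bcoef, e]
      field_simp
      ring
    simp only [mul_zero, zero_add, bigQ, hb, pow_zero, one_mul, map_one]
  | succ N ih =>
    have ih' := ih (fun n => by
      have := hden (n+1); push_cast at this; intro h0; apply this; linear_combination h0)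
    have hr := conn_rel (-2 * ((N+1 : ℕ) : ℂ) - 1) β c
      (fun n => by have := hden n; intro h0; apply this; linear_combination h0) (2*N+1)
    have p : ¬ Even (2*N+1) := by grind
    have z : (-2 * ((N+1 : ℕ) : ℂ) - 1) + ((2*N+1 : ℕ) : ℂ) + 2 = 0 := by push_cast; ring
    have e : (-2 * ((N+1 : ℕ) : ℂ) - 1) + 2 = -2 * (N:ℂ) - 1 := by push_cast; ring
    have hA : connA (-2 * ((N+1 : ℕ) : ℂ) - 1) β c (2*N+1) = 0 := by
      simp only [connA, p, if_false, z, mul_zero, zero_div]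
    have hB : connB (-2 * ((N+1 : ℕ) : ℂ) - 1) β c (2*N+1) = 0 := by
      simp only [connB, p, if_false, z, mul_zero, zero_div]
    rw [hA, hB, e, ih'] at hr
    have i : 2 * (N+1) + 1 = 2*N+1+2 := by ring
    rw [i]
    simp only [map_zero, zero_mul, add_zero] at hr
    rw [← hr]; ring

lemma shift_coef (N k : ℕ) (β c : ℂ)
    (hden : ∀ n : ℕ, β - (2 * (N : ℂ) + 1) + 2 * n ≠ 0) :
    bcoef (-2 * (N : ℂ) - 1) β c (2 * N + 1 + k) = - bcoef (2 * (N : ℂ) + 1) β (-c) k ∧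
    ucoef (-2 * (N : ℂ) - 1) β c (2 * N + 1 + k) = ucoef (2 * (N : ℂ) + 1) β (-c) k := by
  obtain ⟨D, hD⟩ : ∃ D : ℂ, D = 2 * (N:ℂ) + 1 + β + 2 * k := ⟨_, rfl⟩
  have hβ : β = D - (2 * (N:ℂ) + 1) - 2 * k := by rw [hD]; ring
  have h0 : D ≠ 0 := by
    have := hden (2*N+1+k); push_cast at this; rw [hD]; convert this using 1; ring
  have h2 : D + 2 ≠ 0 := by
    have := hden (2*N+1+k+1); push_cast at this; rw [hD]; convert this using 1; ring
  have e : (-2 * (N : ℂ) - 1) + β + 2 * (2 * (N:ℂ) + 1 + k) = D := by rw [hD]; ring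
  rcases Nat.even_or_odd k with hk | hk
  · have p : ¬ Even (2*N+1+k) := by grind
    simp only [bcoef, ucoef, hk, p, if_true, if_false]
    push_cast
    simp only [e, ← hD]
    subst hβ
    constructor <;> field_simp <;> ring
  · have p0 : ¬ Even k := by grind
    have p : Even (2*N+1+k) := by grind
    simp only [bcoef, ucoef, p0, p, if_true, if_false]
    push_cast
    simp only [e, ← hD]
    subst hβ
    constructor <;> field_simp <;> ring

/-- Factorization of the big `-1` Jacobi polynomials for `α = -2N-1`:
`Q_{2N+1+m}(x; -2N-1, β, c) = (-1)^m (x²-1)^N (x-1) Q_m(-x; 2N+1, β, -c)`. -/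
theorem bigQ_factorization_alpha (N : ℕ) (hN : 1 ≤ N) (m : ℕ) (β c : ℂ)
    (hc1 : c ≠ 1) (hc2 : c ≠ -1)
    (hden : ∀ n : ℕ, β - (2 * (N : ℂ) + 1) + 2 * n ≠ 0) :
    bigQ (-2 * (N : ℂ) - 1) β c (2 * N + 1 + m)
      = (-1) ^ m * (X ^ 2 - 1) ^ N * (X - 1)
        * (bigQ (2 * (N : ℂ) + 1) β (-c) m).comp (-X) := by
  have hb := bigQ_base β c N hden
  induction m using Nat.twoStepInduction with
  | zero => rw [add_zero, hb]; simp [bigQ]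
  | one =>
    obtain ⟨s1, s2⟩ := shift_coef N 0 β c hden
    have hu : ucoef (2 * (N : ℂ) + 1) β (-c) 0 = 0 := by simp [ucoef]
    rw [hu] at s2
    have r := bigQ_rec (-2 * (N : ℂ) - 1) β c (2*N)
    simp only [add_zero] at s1 s2
    rw [s1, s2, hb] at r
    rw [show 2 * N + 1 + 1 = 2 * N + 2 by ring, r]
    simp [bigQ]
    ring
  | more n ih0 ih1 =>
    obtain ⟨s1, s2⟩ := shift_coef N (n+1) β c hden
    have r := bigQ_rec (-2 * (N : ℂ) - 1) β c (2*N+1+n)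
    have i : 2 * N + 1 + n + 1 = 2 * N + 1 + (n + 1) := by ring
    rw [i, s1, s2, ih0, ih1] at r
    rw [show 2 * N + 1 + (n + 2) = 2 * N + 1 + n + 2 by ring, r, bigQ_rec (2 * (N : ℂ) + 1)]
    simp only [sub_comp, mul_comp, X_comp, C_comp, map_neg]
    ring
end
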